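/- Let G be a concurrent game with target set F ⊆ S and sure winning region W of player Safe, where F and W are absorbing, and suppose that no subset of S \ (W ∪ F) is an end component. Define the sequence of valuations U_0(s) = 0 if s ∈ W and U_0(s) = 1 otherwise, and U_{k+1}(s) = Pre(U_k)(s). Then lim_{k→∞} U_k = val(◇F), i.e. for every state s the sequence U_k(s) converges to val(◇F)(s). -/

import Mathlib

/-!
The iterates `U k` decrease, because `W` is absorbing, and stay nonnegative, so they converge to
some `V`; since `Pre` is monotone and nonexpansive and there are finitely many states, `V` is a
fixpoint of `Pre`, with `V = 1` on `F` and `V = 0` on `W`. It remains to identify `V` with the value.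

`val ≤ V` (`reachVal_le_of_preR_le`): given a strategy `σ` of Reach, let Safe play a memoryless
best reply to `σ` for the one-step payoff `V`. Then `Pre_{σ,τ}(V) ≤ V`, and by induction every
finite-horizon reachability probability is at most `V`.

`V ≤ val` (`le_reachProb_of_le_preST`): by compactness of the strategy space Reach has a memoryless
strategy `σ` attaining `Pre(V)` at every state (`exists_optimal_reach`), so `V ≤ Pre_{σ,τ}(V)` for
all `τ`. If `V - P^{σ,τ}(◇F)` had a positive maximum, the set of its maximizers would be disjoint
from `W ∪ F` and closed under the chain induced by `σ, τ`; a minimal nonempty closed subset of it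
would be an end component (`exists_isEC_subset`), which is excluded.
-/

open scoped BigOperators
open Filter Topology

attribute [local instance] Classical.propDecidable

noncomputable section

/-- A (memoryless randomized) strategy: at every state, a probability
distribution over the moves available according to `Γ`. -/
structure GStrategy (S M : Type) [Fintype S] [Fintype M] (Γ : S → Finset M) where
  prob : S → M → ℝ
  nonneg : ∀ s a, 0 ≤ prob s a
  sum_one : ∀ s, ∑ a ∈ Γ s, prob s a = 1
  supp_mem : ∀ s a, a ∉ Γ s → prob s a = 0

/-- A two-player concurrent stochastic game. -/
structure ConcurrentGame (S M : Type) [Fintype S] [Fintype M] where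
  ΓR : S → Finset M
  ΓS : S → Finset M
  ΓR_ne : ∀ s, (ΓR s).Nonempty
  ΓS_ne : ∀ s, (ΓS s).Nonempty
  δ : S → M → M → S → ℝ
  δ_nonneg : ∀ s a b s', 0 ≤ δ s a b s'
  δ_sum : ∀ s a b, ∑ s', δ s a b s' = 1

namespace ConcurrentGame

variable {S M : Type} [Fintype S] [Fintype M] (G : ConcurrentGame S M)

/-- Strategies of player Reach. -/
abbrev StratR := GStrategy S M G.ΓR
/-- Strategies of player Safe. -/
abbrev StratS := GStrategy S M G.ΓS

/-- A valuation assigns to each state a number in `[0,1]`. -/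
def Valuation (v : S → ℝ) : Prop := ∀ s, v s ∈ Set.Icc (0 : ℝ) 1

/-- Expected value `Pre_{σ,τ}(v)(s)` of valuation `v` at `s` under strategies `σ, τ`. -/
def preST (σ : G.StratR) (τ : G.StratS) (v : S → ℝ) (s : S) : ℝ :=
  ∑ a, ∑ b, ∑ s', v s' * G.δ s a b s' * σ.prob s a * τ.prob s b

/-- Bellman operator `Pre(v)(s)` for the (maximizing) reachability player. -/
def preR (v : S → ℝ) (s : S) : ℝ :=
  ⨆ σ : G.StratR, ⨅ τ : G.StratS, G.preST σ τ v s

/-- Bellman operator for the (maximizing) safety player. -/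
def preS (v : S → ℝ) (s : S) : ℝ :=
  ⨆ τ : G.StratS, ⨅ σ : G.StratR, G.preST σ τ v s

/-- `Pre_{R:σ}(v)(s)`: value with the Reach strategy fixed. -/
def preRFix (σ : G.StratR) (v : S → ℝ) (s : S) : ℝ :=
  ⨅ τ : G.StratS, G.preST σ τ v s

/-- `Pre_{S:τ}(v)(s)`: value with the Safe strategy fixed. -/
def preSFix (τ : G.StratS) (v : S → ℝ) (s : S) : ℝ :=
  ⨅ σ : G.StratR, G.preST σ τ v s

/-- Potential successors `Dest(s,a,b)`: support of `δ(s,a,b)`. -/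
def Dest (s : S) (a b : M) : Set S := {s' | G.δ s a b s' ≠ 0}

/-- `Dest(s,σ,τ)`: successors under supports of the two strategies. -/
def DestStrat (s : S) (σ : G.StratR) (τ : G.StratS) : Set S :=
  ⋃ a ∈ {a | σ.prob s a ≠ 0}, ⋃ b ∈ {b | τ.prob s b ≠ 0}, G.Dest s a b

/-- One finite-horizon step for reachability of `F` under fixed strategies. -/
def reachStep (F : Set S) (σ : G.StratR) (τ : G.StratS) (v : S → ℝ) : S → ℝ :=
  fun s => if s ∈ F then 1 else G.preST σ τ v s

/-- Probability of reaching `F` within `n` steps under `σ, τ`. -/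
def reachProbN (F : Set S) (σ : G.StratR) (τ : G.StratS) (n : ℕ) : S → ℝ :=
  (G.reachStep F σ τ)^[n] (fun _ => 0)

/-- `P^{σ,τ}_s(◇F)`: probability of eventually reaching `F`
(limit of the finite-horizon reachability probabilities). -/
def reachProb (F : Set S) (σ : G.StratR) (τ : G.StratS) (s : S) : ℝ :=
  ⨆ n, G.reachProbN F σ τ n s

/-- The reachability value `val(◇F)(s)`. -/
def reachVal (F : Set S) (s : S) : ℝ :=
  ⨆ σ : G.StratR, ⨅ τ : G.StratS, G.reachProb F σ τ s

/-- `val_{R:σ}(◇F)`: reachability value under a fixed Reach strategy. -/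
def valFixR (F : Set S) (σ : G.StratR) (s : S) : ℝ :=
  ⨅ τ : G.StratS, G.reachProb F σ τ s

/-- `val_{S:τ}(□C)` for `C = S \ F`: safety value under a fixed Safe strategy
(the complement event of `◇F`). -/
def safeValFix (F : Set S) (τ : G.StratS) (s : S) : ℝ :=
  ⨅ σ : G.StratR, (1 - G.reachProb F σ τ s)

/-- The safety value `val(□C)(s)` for `C = S \ F`. -/
def safeVal (F : Set S) (s : S) : ℝ :=
  ⨆ τ : G.StratS, G.safeValFix F τ s

/-- The sure winning region `W` of the safety player. -/
def sureWin (F : Set S) : Set S := {s | G.reachVal F s = 0}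

/-- A set of states is absorbing if all transitions from it stay inside it. -/
def Absorbing (F : Set S) : Prop := ∀ s ∈ F, ∀ a b, G.Dest s a b ⊆ F

/-- End components. -/
def IsEC (E : Set S) : Prop :=
  E.Nonempty ∧ ∃ σ : G.StratR, ∃ τ : G.StratS,
    (∀ s ∈ E, G.DestStrat s σ τ ⊆ E) ∧
    ∀ s ∈ E, ∀ s' ∈ E, ∃ n : ℕ, ∃ p : ℕ → S, p 0 = s ∧ p n = s' ∧
      (∀ i ≤ n, p i ∈ E) ∧ ∀ i < n, p (i + 1) ∈ G.DestStrat (p i) σ τ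

/-- Maximal end components. -/
def IsMEC (E : Set S) : Prop :=
  G.IsEC E ∧ ∀ E', G.IsEC E' → E ⊆ E' → E' = E

/-- A move `a` of player Reach is staying (w.r.t. `E`) at `s`. -/
def Staying (E : Set S) (s : S) (a : M) : Prop :=
  a ∈ G.ΓR s ∧ ∀ b ∈ G.ΓS s, G.Dest s a b ⊆ E

/-- `Σ^{exit(E)}_R(s)`: Reach strategies forced to leave `E` from `s`,
using no staying move. -/
def ExitStrats (E : Set S) (s : S) : Set G.StratR :=
  {σ | (∀ τ : G.StratS, ¬ G.DestStrat s σ τ ⊆ E) ∧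
    ∀ a, σ.prob s a ≠ 0 → ¬ G.Staying E s a}

/-- `Pre^{exit(E)}(v)(s)`. -/
def preExit (E : Set S) (v : S → ℝ) (s : S) : ℝ :=
  ⨆ σ : G.ExitStrats E s, ⨅ τ : G.StratS, G.preST σ.1 τ v s

/-- The best exit `bestExit_v(E)` of `E` w.r.t. valuation `v`. -/
def bestExit (E : Set S) (v : S → ℝ) : ℝ :=
  ⨆ s ∈ E, G.preExit E v s

/-- One attractor step (within `E`). -/
def attrStep (E B : Set S) : Set S :=
  B ∪ {s ∈ E | ∃ a ∈ G.ΓR s, ∀ b ∈ G.ΓS s, G.Dest s a b ⊆ B}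

/-- The attractor `Attr(B)` of `B ⊆ E` within `E`. -/
def attr (E B : Set S) : Set S := (G.attrStep E)^[Nat.card E] B

/-- The states of `E` realizing the best exit w.r.t. `v`. -/
def bestSet (E : Set S) (v : S → ℝ) : Set S :=
  {s ∈ E | G.preExit E v s = G.bestExit E v}

/-- The sequence `(D^i(v), D^i(E))` of intermediate valuations and remaining
sets of the DEFLATE procedure. -/
def deflateSeq (v : S → ℝ) (E : Set S) : ℕ → (S → ℝ) × Set S
  | 0 => (v, E)
  | i + 1 =>
    (fun s => if s ∈ (deflateSeq v E i).2 then
        min ((deflateSeq v E i).1 s)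
          (G.bestExit (deflateSeq v E i).2 (deflateSeq v E i).1)
      else (deflateSeq v E i).1 s,
     (deflateSeq v E i).2 \
       G.attr (deflateSeq v E i).2
         (G.bestSet (deflateSeq v E i).2 (deflateSeq v E i).1))

/-- `DEFLATE(v, E)`. -/
def deflate (v : S → ℝ) (E : Set S) : S → ℝ := (G.deflateSeq v E (Nat.card E)).1

/-- Apply DEFLATE on every maximal end component
(maximal end components are pairwise disjoint). -/
def deflateAll (v : S → ℝ) : S → ℝ :=
  fun s => if h : ∃ E, G.IsMEC E ∧ s ∈ E then G.deflate v h.choose s else v s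

/-- One step of the bounded value iteration upper bound: apply `Pre`,
then DEFLATE every maximal end component. -/
def bviStep (v : S → ℝ) : S → ℝ := G.deflateAll (G.preR v)

/-- The upper-bound sequence `U_k` of bounded value iteration. -/
def upperSeq (W : Set S) : ℕ → S → ℝ
  | 0 => fun s => if s ∈ W then 0 else 1
  | k + 1 => G.bviStep (upperSeq W k)

/-- The sequence `(v_i, E_i)` of the INFLATE procedure (dual of DEFLATE,
for the safety player). -/
def inflateSeq (v : S → ℝ) (E : Set S) : ℕ → (S → ℝ) × Set S
  | 0 => (v, E)
  | i + 1 =>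
    (fun s => if s ∈ (inflateSeq v E i).2 then
        max ((inflateSeq v E i).1 s)
          (1 - G.bestExit (inflateSeq v E i).2 (fun t => 1 - (inflateSeq v E i).1 t))
      else (inflateSeq v E i).1 s,
     (inflateSeq v E i).2 \
       G.attr (inflateSeq v E i).2
         (G.bestSet (inflateSeq v E i).2 (fun t => 1 - (inflateSeq v E i).1 t)))

/-- `INFLATE(v, E)`. -/
def inflate (v : S → ℝ) (E : Set S) : S → ℝ := (G.inflateSeq v E (Nat.card E)).1

end ConcurrentGame


/-! ### Memoryless strategies form a compact space -/

namespace GStrategy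

variable {S M : Type} [Fintype S] [Fintype M] {Γ : S → Finset M}

/-- The topology of entrywise convergence of the move probabilities. -/
instance instTopologicalSpace : TopologicalSpace (GStrategy S M Γ) :=
  TopologicalSpace.induced GStrategy.prob inferInstance

lemma continuous_prob (s : S) (a : M) :
    Continuous fun x : GStrategy S M Γ => x.prob s a :=
  (continuous_apply a).comp ((continuous_apply s).comp continuous_induced_dom)

lemma sum_prob (x : GStrategy S M Γ) (s : S) : ∑ a, x.prob s a = 1 := by
  rw [← x.sum_one s]
  exact (Finset.sum_subset (Finset.subset_univ _) fun a _ ha => x.supp_mem s a ha).symm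

instance instCompactSpace : CompactSpace (GStrategy S M Γ) := by
  have hind : Topology.IsInducing (GStrategy.prob : GStrategy S M Γ → S → M → ℝ) := ⟨rfl⟩
  refine ⟨hind.isCompact_iff.2 ?_⟩
  have hrange : GStrategy.prob '' (Set.univ : Set (GStrategy S M Γ)) =
      {p : S → M → ℝ | ∀ s, (∀ a, 0 ≤ p s a) ∧ ∑ a ∈ Γ s, p s a = 1 ∧ ∀ a, a ∉ Γ s → p s a = 0} := by
    ext p
    constructor
    · rintro ⟨x, -, rfl⟩ s
      exact ⟨x.nonneg s, x.sum_one s, x.supp_mem s⟩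
    · intro h
      exact ⟨⟨p, fun s => (h s).1, fun s => (h s).2.1, fun s => (h s).2.2⟩, trivial, rfl⟩
  refine (isCompact_Icc (a := (0 : S → M → ℝ)) (b := 1)).of_isClosed_subset ?_ ?_
  · rw [hrange]
    simp only [Set.ofPred_forall, Set.ofPred_and]
    refine isClosed_iInter fun s => (isClosed_iInter fun a => ?_).inter
      (IsClosed.inter ?_ (isClosed_iInter fun a => isClosed_iInter fun _ => ?_))
    · exact isClosed_le continuous_const (by fun_prop)
    · exact isClosed_eq (by fun_prop) continuous_const
    · exact isClosed_eq (by fun_prop) continuous_const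
  · rintro _ ⟨x, -, rfl⟩
    refine ⟨fun s a => x.nonneg s a, fun s a => ?_⟩
    have h := Finset.single_le_sum (fun b _ => x.nonneg s b) (Finset.mem_univ a)
    rwa [x.sum_prob s] at h

lemma nonempty (hΓ : ∀ s, (Γ s).Nonempty) : Nonempty (GStrategy S M Γ) := by
  choose f hf using hΓ
  refine ⟨⟨fun s a => if a = f s then 1 else 0, fun s a => ?_, fun s => ?_, fun s a ha => ?_⟩⟩
  · split_ifs <;> norm_num
  · simp [hf]
  · rw [if_neg]
    rintro rfl
    exact ha (hf s)

/-- Maximizers chosen separately at every state combine into a single strategy, because the payoff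
at `s` only depends on the move distribution at `s`. -/
lemma exists_maximizer (hΓ : ∀ s, (Γ s).Nonempty) (f : S → GStrategy S M Γ → ℝ)
    (hf : ∀ s, UpperSemicontinuous (f s))
    (hloc : ∀ s x y, x.prob s = y.prob s → f s x = f s y) :
    ∃ x, ∀ s y, f s y ≤ f s x := by
  have := nonempty hΓ
  have hmax : ∀ s, ∃ x, ∀ y, f s y ≤ f s x := fun s => by
    obtain ⟨x, -, hx⟩ := UpperSemicontinuousOn.exists_isMaxOn Set.univ_nonempty isCompact_univ
      ((hf s).upperSemicontinuousOn Set.univ)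
    exact ⟨x, fun y => hx (Set.mem_univ y)⟩
  choose g hg using hmax
  refine ⟨⟨fun s => (g s).prob s, fun s => (g s).nonneg s, fun s => (g s).sum_one s,
    fun s => (g s).supp_mem s⟩, fun s y => (hg s y).trans_eq (hloc s _ _ rfl)⟩

end GStrategy

namespace ConcurrentGame

variable {S M : Type} [Fintype S] [Fintype M] (G : ConcurrentGame S M)

/-! ### The Markov chain induced by two strategies -/

/-- The transition probability `P(s, s')` of the Markov chain induced by `σ` and `τ`. -/
def kern (σ : G.StratR) (τ : G.StratS) (s s' : S) : ℝ :=
  ∑ a, ∑ b, G.δ s a b s' * σ.prob s a * τ.prob s b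

lemma kern_nonneg (σ : G.StratR) (τ : G.StratS) (s s' : S) : 0 ≤ G.kern σ τ s s' :=
  Finset.sum_nonneg fun a _ => Finset.sum_nonneg fun b _ =>
    mul_nonneg (mul_nonneg (G.δ_nonneg s a b s') (σ.nonneg s a)) (τ.nonneg s b)

lemma preST_eq_sum_kern (σ : G.StratR) (τ : G.StratS) (v : S → ℝ) (s : S) :
    G.preST σ τ v s = ∑ s', v s' * G.kern σ τ s s' := by
  simp only [preST, kern, Finset.mul_sum]
  have h : ∀ a, ∑ b, ∑ s', v s' * G.δ s a b s' * σ.prob s a * τ.prob s b =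
      ∑ s', ∑ b, v s' * (G.δ s a b s' * σ.prob s a * τ.prob s b) := fun a => by
    rw [Finset.sum_comm]
    simp only [mul_assoc]
  rw [Finset.sum_congr rfl fun a _ => h a, Finset.sum_comm]

lemma sum_kern (σ : G.StratR) (τ : G.StratS) (s : S) : ∑ s', G.kern σ τ s s' = 1 := by
  have h := G.preST_eq_sum_kern σ τ (fun _ => 1) s
  simp only [one_mul] at h
  rw [← h, preST]
  simp only [one_mul, ← Finset.sum_mul, G.δ_sum, ← Finset.mul_sum, τ.sum_prob, σ.sum_prob, mul_one]

lemma mem_destStrat_iff (σ : G.StratR) (τ : G.StratS) (s s' : S) :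
    s' ∈ G.DestStrat s σ τ ↔ G.kern σ τ s s' ≠ 0 := by
  have hterm : ∀ a b, 0 ≤ G.δ s a b s' * σ.prob s a * τ.prob s b := fun a b =>
    mul_nonneg (mul_nonneg (G.δ_nonneg s a b s') (σ.nonneg s a)) (τ.nonneg s b)
  rw [kern, ne_eq, Finset.sum_eq_zero_iff_of_nonneg fun a _ =>
    Finset.sum_nonneg fun b _ => hterm a b]
  simp only [Finset.sum_eq_zero_iff_of_nonneg fun b _ => hterm _ b]
  simp only [DestStrat, Dest, Set.mem_iUnion, Set.mem_ofPred_eq, Finset.mem_univ, true_imp_iff,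
    not_forall, mul_eq_zero, not_or]
  constructor
  · rintro ⟨a, ha, b, hb, h⟩
    exact ⟨a, b, ⟨h, ha⟩, hb⟩
  · rintro ⟨a, b, ⟨h, ha⟩, hb⟩
    exact ⟨a, ha, b, hb, h⟩

lemma mem_of_kern_ne_zero {A : Set S} (hA : G.Absorbing A) {σ : G.StratR} {τ : G.StratS}
    {s s' : S} (hs : s ∈ A) (h : G.kern σ τ s s' ≠ 0) : s' ∈ A := by
  rw [← mem_destStrat_iff] at h
  simp only [DestStrat, Set.mem_iUnion] at h
  obtain ⟨a, -, b, -, h⟩ := h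
  exact hA s hs a b h

lemma preST_mono (σ : G.StratR) (τ : G.StratS) {u v : S → ℝ} (h : ∀ s, u s ≤ v s) (s : S) :
    G.preST σ τ u s ≤ G.preST σ τ v s := by
  rw [preST_eq_sum_kern, preST_eq_sum_kern]
  exact Finset.sum_le_sum fun s' _ => mul_le_mul_of_nonneg_right (h s') (G.kern_nonneg σ τ s s')

lemma preST_add_const (σ : G.StratR) (τ : G.StratS) (v : S → ℝ) (c : ℝ) (s : S) :
    G.preST σ τ (fun t => v t + c) s = G.preST σ τ v s + c := by
  rw [preST_eq_sum_kern, preST_eq_sum_kern]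
  simp only [add_mul, Finset.sum_add_distrib, ← Finset.mul_sum, sum_kern, mul_one]

lemma preST_const (σ : G.StratR) (τ : G.StratS) (c : ℝ) (s : S) :
    G.preST σ τ (fun _ => c) s = c := by
  rw [preST_eq_sum_kern, ← Finset.mul_sum, sum_kern, mul_one]

/-- Inside an absorbing set on which `v` is constant, one step does not change the value. -/
lemma preST_eq_of_absorbing {A : Set S} (hA : G.Absorbing A) (σ : G.StratR) (τ : G.StratS)
    {v : S → ℝ} {c : ℝ} (hv : ∀ t ∈ A, v t = c) {s : S} (hs : s ∈ A) :
    G.preST σ τ v s = c := by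
  rw [← G.preST_const σ τ c s, preST_eq_sum_kern, preST_eq_sum_kern]
  refine Finset.sum_congr rfl fun s' _ => ?_
  by_cases h : G.kern σ τ s s' = 0
  · rw [h, mul_zero, mul_zero]
  · rw [hv s' (G.mem_of_kern_ne_zero hA hs h)]

lemma preST_abs_le (σ : G.StratR) (τ : G.StratS) (v : S → ℝ) (s : S) :
    |G.preST σ τ v s| ≤ ∑ t, |v t| := by
  have hle : ∀ t, |v t| ≤ ∑ t, |v t| := fun t =>
    Finset.single_le_sum (fun t _ => abs_nonneg (v t)) (Finset.mem_univ t)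
  rw [abs_le]
  constructor
  · rw [← G.preST_const σ τ (-∑ t, |v t|) s]
    exact G.preST_mono σ τ (fun t => neg_le.1 ((neg_le_abs (v t)).trans (hle t))) s
  · refine le_trans ?_ (G.preST_const σ τ (∑ t, |v t|) s).le
    exact G.preST_mono σ τ (fun t => (le_abs_self (v t)).trans (hle t)) s

/-- A set closed under the induced chain contains an end component, namely any minimal nonempty
closed subset: it is strongly connected since reachability sets are closed. -/
lemma exists_isEC_subset (σ : G.StratR) (τ : G.StratS) {C : Set S} (hne : C.Nonempty)
    (hC : ∀ s ∈ C, G.DestStrat s σ τ ⊆ C) : ∃ E ⊆ C, G.IsEC E := by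
  let P : Set S → Prop := fun E => E.Nonempty ∧ ∀ s ∈ E, G.DestStrat s σ τ ⊆ E
  obtain ⟨E, hEC, hE⟩ := exists_minimal_le_of_wellFoundedLT P C ⟨hne, hC⟩
  refine ⟨E, hEC, hE.prop.1, σ, τ, hE.prop.2, fun s hs => ?_⟩
  let R : Set S := {t | ∃ n : ℕ, ∃ p : ℕ → S, p 0 = s ∧ p n = t ∧
      (∀ i ≤ n, p i ∈ E) ∧ ∀ i < n, p (i + 1) ∈ G.DestStrat (p i) σ τ}
  have hRE : R ⊆ E := by
    rintro t ⟨n, p, -, rfl, hp, -⟩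
    exact hp n le_rfl
  have hR : P R := by
    refine ⟨⟨s, 0, fun _ => s, rfl, rfl, fun _ _ => hs, fun i hi => absurd hi (by omega)⟩, ?_⟩
    rintro t ⟨n, p, h0, rfl, hp, hstep⟩ u hu
    refine ⟨n + 1, fun i => if i ≤ n then p i else u, by simpa using h0, by simp, ?_, ?_⟩
    · intro i _
      dsimp only
      split_ifs with hi
      · exact hp i hi
      · exact hE.prop.2 _ (hp n le_rfl) hu
    · intro i hi
      dsimp only
      rw [if_pos (by omega : i ≤ n)]
      split_ifs with hi'
      · exact hstep i (by omega)
      · obtain rfl : i = n := by omega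
        exact hu
  exact fun t ht => hE.le_of_le hR hRE ht

/-! ### The Bellman operator and its optimal strategies -/

lemma continuous_preST_left (τ : G.StratS) (v : S → ℝ) (s : S) :
    Continuous fun σ : G.StratR => G.preST σ τ v s := by
  unfold preST
  refine continuous_finsetSum _ fun a _ => continuous_finsetSum _ fun b _ =>
    continuous_finsetSum _ fun s' _ => ?_
  exact (continuous_const.mul (GStrategy.continuous_prob s a)).mul continuous_const

lemma continuous_preST_right (σ : G.StratR) (v : S → ℝ) (s : S) :
    Continuous fun τ : G.StratS => G.preST σ τ v s := by
  unfold preST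
  refine continuous_finsetSum _ fun a _ => continuous_finsetSum _ fun b _ =>
    continuous_finsetSum _ fun s' _ => ?_
  exact continuous_const.mul (GStrategy.continuous_prob s b)

lemma bddBelow_preST (σ : G.StratR) (v : S → ℝ) (s : S) :
    BddBelow (Set.range fun τ : G.StratS => G.preST σ τ v s) :=
  ⟨-∑ t, |v t|, by rintro _ ⟨τ, rfl⟩; exact (abs_le.1 (G.preST_abs_le σ τ v s)).1⟩

lemma bddAbove_preRFix (v : S → ℝ) (s : S) :
    BddAbove (Set.range fun σ : G.StratR => ⨅ τ : G.StratS, G.preST σ τ v s) := by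
  obtain ⟨τ⟩ := GStrategy.nonempty G.ΓS_ne
  refine ⟨∑ t, |v t|, ?_⟩
  rintro _ ⟨σ, rfl⟩
  exact (ciInf_le (G.bddBelow_preST σ v s) τ).trans (abs_le.1 (G.preST_abs_le σ τ v s)).2

/-- The supremum in `Pre` is attained, simultaneously at all states. -/
lemma exists_optimal_reach (v : S → ℝ) :
    ∃ σ : G.StratR, ∀ (τ : G.StratS) s, G.preR v s ≤ G.preST σ τ v s := by
  have := GStrategy.nonempty G.ΓR_ne
  obtain ⟨σ, hσ⟩ := GStrategy.exists_maximizer G.ΓR_ne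
    (fun s (σ : G.StratR) => ⨅ τ : G.StratS, G.preST σ τ v s)
    (fun s => upperSemicontinuous_ciInf (fun σ => G.bddBelow_preST σ v s)
      fun τ => (G.continuous_preST_left τ v s).upperSemicontinuous)
    (fun s x y h => by simp only [preST, h])
  exact ⟨σ, fun τ s => (ciSup_le (hσ s)).trans (ciInf_le (G.bddBelow_preST σ v s) τ)⟩

/-- Against a fixed `σ`, the infimum over Safe's replies is attained simultaneously at all states. -/
lemma exists_best_reply (σ : G.StratR) (v : S → ℝ) :
    ∃ τ : G.StratS, ∀ s, G.preST σ τ v s ≤ G.preR v s := by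
  have := GStrategy.nonempty G.ΓS_ne
  obtain ⟨τ, hτ⟩ := GStrategy.exists_maximizer G.ΓS_ne
    (fun s (τ : G.StratS) => -G.preST σ τ v s)
    (fun s => (G.continuous_preST_right σ v s).neg.upperSemicontinuous)
    (fun s x y h => by simp only [preST, h])
  exact ⟨τ, fun s => (le_ciInf fun τ' => neg_le_neg_iff.1 (hτ s τ')).trans
    (le_ciSup (G.bddAbove_preRFix v s) σ)⟩

lemma preR_le_add {u v : S → ℝ} {c : ℝ} (h : ∀ s, u s ≤ v s + c) (s : S) :
    G.preR u s ≤ G.preR v s + c := by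
  obtain ⟨σ, hσ⟩ := G.exists_optimal_reach u
  obtain ⟨τ, hτ⟩ := G.exists_best_reply σ v
  calc G.preR u s ≤ G.preST σ τ u s := hσ τ s
    _ ≤ G.preST σ τ (fun t => v t + c) s := G.preST_mono σ τ h s
    _ = G.preST σ τ v s + c := G.preST_add_const σ τ v c s
    _ ≤ G.preR v s + c := by linarith [hτ s]

lemma preR_mono {u v : S → ℝ} (h : ∀ s, u s ≤ v s) (s : S) : G.preR u s ≤ G.preR v s := by
  simpa using G.preR_le_add (c := 0) (by simpa using h) s

lemma preR_eq_of_absorbing {A : Set S} (hA : G.Absorbing A) {v : S → ℝ} {c : ℝ}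
    (hv : ∀ t ∈ A, v t = c) {s : S} (hs : s ∈ A) : G.preR v s = c := by
  obtain ⟨σ, hσ⟩ := G.exists_optimal_reach v
  obtain ⟨τ, hτ⟩ := G.exists_best_reply σ v
  have h := G.preST_eq_of_absorbing hA σ τ hv hs
  exact le_antisymm (h ▸ hσ τ s) (h ▸ hτ s)

/-! ### Reachability probabilities -/

lemma reachProbN_succ (F : Set S) (σ : G.StratR) (τ : G.StratS) (n : ℕ) (s : S) :
    G.reachProbN F σ τ (n + 1) s = if s ∈ F then 1 else G.preST σ τ (G.reachProbN F σ τ n) s := by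
  simp only [reachProbN, Function.iterate_succ_apply']
  rfl

/-- The finite-horizon approximations of `P(◇F)` lie below every nonnegative superharmonic function
of the induced chain that is at least `1` on `F`. -/
lemma reachProbN_le {F : Set S} {σ : G.StratR} {τ : G.StratS} {v : S → ℝ} (h0 : ∀ s, 0 ≤ v s)
    (hF : ∀ s ∈ F, 1 ≤ v s) (hv : ∀ s, G.preST σ τ v s ≤ v s) (n : ℕ) :
    ∀ s, G.reachProbN F σ τ n s ≤ v s := by
  induction n with
  | zero => exact h0
  | succ n ih =>
    intro s
    rw [reachProbN_succ]
    split_ifs with hs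
    · exact hF s hs
    · exact (G.preST_mono σ τ ih s).trans (hv s)

lemma reachProbN_le_one (F : Set S) (σ : G.StratR) (τ : G.StratS) (n : ℕ) (s : S) :
    G.reachProbN F σ τ n s ≤ 1 :=
  G.reachProbN_le (v := fun _ => 1) (fun _ => zero_le_one) (fun _ _ => le_rfl)
    (fun s => (G.preST_const σ τ 1 s).le) n s

lemma reachProbN_mono (F : Set S) (σ : G.StratR) (τ : G.StratS) (s : S) :
    Monotone fun n => G.reachProbN F σ τ n s := by
  refine monotone_nat_of_le_succ fun n => ?_
  induction n generalizing s with
  | zero =>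
    rw [reachProbN_succ]
    split_ifs with hs
    · exact zero_le_one
    · exact (G.preST_const σ τ 0 s).ge
  | succ n ih =>
    rw [reachProbN_succ, G.reachProbN_succ F σ τ (n + 1)]
    split_ifs with hs
    · exact le_rfl
    · exact G.preST_mono σ τ ih s

lemma bddAbove_reachProbN (F : Set S) (σ : G.StratR) (τ : G.StratS) (s : S) :
    BddAbove (Set.range fun n => G.reachProbN F σ τ n s) :=
  ⟨1, by rintro _ ⟨n, rfl⟩; exact G.reachProbN_le_one F σ τ n s⟩

lemma reachProb_nonneg (F : Set S) (σ : G.StratR) (τ : G.StratS) (s : S) :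
    0 ≤ G.reachProb F σ τ s :=
  le_ciSup (G.bddAbove_reachProbN F σ τ s) 0

lemma reachProb_le_one (F : Set S) (σ : G.StratR) (τ : G.StratS) (s : S) :
    G.reachProb F σ τ s ≤ 1 :=
  ciSup_le fun n => G.reachProbN_le_one F σ τ n s

lemma tendsto_reachProbN (F : Set S) (σ : G.StratR) (τ : G.StratS) (s : S) :
    Tendsto (fun n => G.reachProbN F σ τ n s) atTop (𝓝 (G.reachProb F σ τ s)) :=
  tendsto_atTop_ciSup (G.reachProbN_mono F σ τ s) (G.bddAbove_reachProbN F σ τ s)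

lemma reachProb_of_mem {F : Set S} (σ : G.StratR) (τ : G.StratS) {s : S} (hs : s ∈ F) :
    G.reachProb F σ τ s = 1 := by
  refine le_antisymm (G.reachProb_le_one F σ τ s) ?_
  have h := le_ciSup (G.bddAbove_reachProbN F σ τ s) 1
  rwa [reachProbN_succ, if_pos hs] at h

lemma reachProb_eq_preST {F : Set S} (σ : G.StratR) (τ : G.StratS) {s : S} (hs : s ∉ F) :
    G.reachProb F σ τ s = G.preST σ τ (G.reachProb F σ τ) s := by
  refine tendsto_nhds_unique ((tendsto_add_atTop_iff_nat 1).2 (G.tendsto_reachProbN F σ τ s)) ?_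
  simp only [reachProbN_succ, if_neg hs, preST_eq_sum_kern]
  exact tendsto_finsetSum _ fun s' _ => (G.tendsto_reachProbN F σ τ s').mul_const _

lemma bddBelow_reachProb (F : Set S) (σ : G.StratR) (s : S) :
    BddBelow (Set.range fun τ : G.StratS => G.reachProb F σ τ s) :=
  ⟨0, by rintro _ ⟨τ, rfl⟩; exact G.reachProb_nonneg F σ τ s⟩

lemma bddAbove_valFixR (F : Set S) (s : S) :
    BddAbove (Set.range fun σ : G.StratR => ⨅ τ : G.StratS, G.reachProb F σ τ s) := by
  obtain ⟨τ⟩ := GStrategy.nonempty G.ΓS_ne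
  refine ⟨1, ?_⟩
  rintro _ ⟨σ, rfl⟩
  exact (ciInf_le (G.bddBelow_reachProb F σ s) τ).trans (G.reachProb_le_one F σ τ s)

lemma le_reachVal {F : Set S} {s : S} {c : ℝ} (σ : G.StratR)
    (h : ∀ τ : G.StratS, c ≤ G.reachProb F σ τ s) : c ≤ G.reachVal F s := by
  have := GStrategy.nonempty G.ΓS_ne
  exact (le_ciInf h).trans (le_ciSup (G.bddAbove_valFixR F s) σ)

lemma one_le_reachVal {F : Set S} {s : S} (hs : s ∈ F) : 1 ≤ G.reachVal F s := by
  obtain ⟨σ⟩ := GStrategy.nonempty G.ΓR_ne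
  exact G.le_reachVal σ fun τ => (G.reachProb_of_mem σ τ hs).ge

/-! ### Fixpoints of the Bellman operator -/

/-- Any nonnegative pre-fixpoint of `Pre` that is at least `1` on `F` bounds the value from above:
Safe answers each `σ` by the memoryless best reply for `Pre`. -/
lemma reachVal_le_of_preR_le {F : Set S} {v : S → ℝ} (h0 : ∀ s, 0 ≤ v s)
    (hF : ∀ s ∈ F, 1 ≤ v s) (hv : ∀ s, G.preR v s ≤ v s) (s : S) : G.reachVal F s ≤ v s := by
  have := GStrategy.nonempty G.ΓR_ne
  refine ciSup_le fun σ => ?_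
  obtain ⟨τ, hτ⟩ := G.exists_best_reply σ v
  exact (ciInf_le (G.bddBelow_reachProb F σ s) τ).trans
    (ciSup_le fun n => G.reachProbN_le h0 hF (fun t => (hτ t).trans (hv t)) n s)

/-- Maximum principle: without end components off `W ∪ F`, a valuation `v` that is subharmonic for
the induced chain, at most `1` on `F` and at most `0` on `W` lies below `P(◇F)`. If `v - P(◇F)` had
a positive maximum, its set of maximizers would be closed under the chain and avoid `W ∪ F`. -/
lemma le_reachProb_of_le_preST {F W : Set S}
    (hNoEC : ∀ E : Set S, E ⊆ Set.univ \ (W ∪ F) → ¬ G.IsEC E)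
    {v : S → ℝ} (hF : ∀ s ∈ F, v s ≤ 1) (hW : ∀ s ∈ W, v s ≤ 0) (σ : G.StratR) (τ : G.StratS)
    (hv : ∀ s, v s ≤ G.preST σ τ v s) (s : S) : v s ≤ G.reachProb F σ τ s := by
  by_contra! hlt
  obtain ⟨m, -, hm⟩ := Finset.exists_max_image Finset.univ
    (fun t => v t - G.reachProb F σ τ t) ⟨s, Finset.mem_univ s⟩
  let d : S → ℝ := fun t => v t - G.reachProb F σ τ t
  have hmax : ∀ t, d t ≤ d m := fun t => hm t (Finset.mem_univ t)
  have hpos : 0 < d m := (sub_pos.2 hlt).trans_le (hmax s)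
  have hoff : ∀ t, d t = d m → t ∉ W ∧ t ∉ F := fun t ht => by
    rw [← ht] at hpos
    refine ⟨fun h => ?_, fun h => ?_⟩
    · linarith [hW t h, G.reachProb_nonneg F σ τ t, show d t = v t - G.reachProb F σ τ t from rfl]
    · linarith [hF t h, G.reachProb_of_mem σ τ h, show d t = v t - G.reachProb F σ τ t from rfl]
  have hclosed : ∀ t ∈ {t | d t = d m}, G.DestStrat t σ τ ⊆ {t | d t = d m} := by
    intro t ht u hu
    rw [mem_destStrat_iff] at hu
    have hsub : d t ≤ ∑ u, d u * G.kern σ τ t u := by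
      have h1 := hv t
      have h2 := G.reachProb_eq_preST σ τ (hoff t ht).2
      rw [preST_eq_sum_kern] at h1 h2
      simp only [d, sub_mul, Finset.sum_sub_distrib]
      linarith
    -- `d t` is both the maximum and at most the average of `d`, so no mass lies below the maximum.
    have hnonneg : ∀ u ∈ Finset.univ, 0 ≤ (d m - d u) * G.kern σ τ t u := fun u _ =>
      mul_nonneg (sub_nonneg.2 (hmax u)) (G.kern_nonneg σ τ t u)
    have hzero : ∑ u, (d m - d u) * G.kern σ τ t u = 0 := by
      refine le_antisymm ?_ (Finset.sum_nonneg hnonneg)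
      simp only [sub_mul, Finset.sum_sub_distrib, ← Finset.mul_sum, sum_kern, mul_one]
      have ht' : d t = d m := ht
      linarith
    have h := (Finset.sum_eq_zero_iff_of_nonneg hnonneg).1 hzero u (Finset.mem_univ u)
    exact (sub_eq_zero.1 ((mul_eq_zero.1 h).resolve_right hu)).symm
  obtain ⟨E, hE, hEC⟩ := G.exists_isEC_subset σ τ (C := {t | d t = d m}) ⟨m, rfl⟩ hclosed
  refine hNoEC E (fun t ht => ⟨trivial, ?_⟩) hEC
  rintro (h | h)
  exacts [(hoff t (hE ht)).1 h, (hoff t (hE ht)).2 h]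

end ConcurrentGame

/-- In a concurrent game in which `F` and the sure winning region `W`
of the safety player are absorbing and no subset of `S \ (W ∪ F)` is an end component,
the naive upper-bound value iteration `U_0 = (0 on W, 1 elsewhere)`, `U_(k+1) = Pre(U_k)`
converges pointwise to the reachability value `val(◇F)`. -/
theorem bvi_no_ec_converges {S M : Type} [Fintype S] [Fintype M] (G : ConcurrentGame S M)
    (F : Set S) (hF : G.Absorbing F) (hW : G.Absorbing (G.sureWin F))
    (hNoEC : ∀ E : Set S, E ⊆ Set.univ \ (G.sureWin F ∪ F) → ¬ G.IsEC E)
    (U : ℕ → S → ℝ)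
    (hU0 : ∀ s, U 0 s = if s ∈ G.sureWin F then 0 else 1)
    (hUsucc : ∀ k s, U (k + 1) s = G.preR (U k) s) :
    ∀ s, Filter.Tendsto (fun k => U k s) Filter.atTop (nhds (G.reachVal F s)) := by
  have hU0_mem : ∀ s, 0 ≤ U 0 s ∧ U 0 s ≤ 1 := fun s => by
    rw [hU0]; split_ifs <;> norm_num
  have hUW : ∀ k, ∀ s ∈ G.sureWin F, U k s = 0 := by
    intro k
    induction k with
    | zero => intro s hs; rw [hU0, if_pos hs]
    | succ k ih => intro s hs; rw [hUsucc]; exact G.preR_eq_of_absorbing hW ih hs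
  have hUF : ∀ k, ∀ s ∈ F, U k s = 1 := by
    intro k
    induction k with
    | zero =>
      intro s hs
      rw [hU0, if_neg]
      intro (h : G.reachVal F s = 0)
      linarith [G.one_le_reachVal hs]
    | succ k ih => intro s hs; rw [hUsucc]; exact G.preR_eq_of_absorbing hF ih hs
  have hconst : ∀ c : ℝ, ∀ s, G.preR (fun _ => c) s = c := fun c s =>
    G.preR_eq_of_absorbing (A := Set.univ) (fun _ _ _ _ => Set.subset_univ _) (fun _ _ => rfl)
      (Set.mem_univ s)
  have hnonneg : ∀ k s, 0 ≤ U k s := by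
    intro k
    induction k with
    | zero => exact fun s => (hU0_mem s).1
    | succ k ih => intro s; rw [hUsucc, ← hconst 0 s]; exact G.preR_mono ih s
  have hanti : ∀ k s, U (k + 1) s ≤ U k s := by
    intro k
    induction k with
    | zero =>
      intro s
      by_cases hs : s ∈ G.sureWin F
      · rw [hUW _ s hs, hUW _ s hs]
      · rw [hU0 s, if_neg hs, hUsucc, ← hconst 1 s]
        exact G.preR_mono (fun t => (hU0_mem t).2) s
    | succ k ih => intro s; rw [hUsucc (k + 1), hUsucc k]; exact G.preR_mono ih s
  have hbdd : ∀ s, BddBelow (Set.range fun k => U k s) := fun s =>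
    ⟨0, by rintro _ ⟨k, rfl⟩; exact hnonneg k s⟩
  let V : S → ℝ := fun s => ⨅ k, U k s
  have hlim : ∀ s, Tendsto (fun k => U k s) atTop (𝓝 (V s)) := fun s =>
    tendsto_atTop_ciInf (antitone_nat_of_succ_le fun k => hanti k s) (hbdd s)
  have hVle : ∀ k s, V s ≤ U k s := fun k s => ciInf_le (hbdd s) k
  have hpre_le : ∀ s, G.preR V s ≤ V s := fun s =>
    ge_of_tendsto ((tendsto_add_atTop_iff_nat 1).2 (hlim s))
      (Eventually.of_forall fun k => by rw [hUsucc]; exact G.preR_mono (hVle k) s)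
  have hle_pre : ∀ s, V s ≤ G.preR V s := by
    intro s
    refine le_of_forall_pos_le_add fun ε hε => ?_
    -- Finitely many states: the convergence is uniform, and `Pre` is nonexpansive.
    obtain ⟨k, hk⟩ := (eventually_all.2 fun t =>
      (hlim t).eventually (eventually_le_nhds (lt_add_of_pos_right (V t) hε))).exists
    exact (hVle (k + 1) s).trans ((hUsucc k s).trans_le (G.preR_le_add hk s))
  have hVF : ∀ s ∈ F, V s = 1 := fun s hs => by simp [V, hUF _ s hs]
  have hVW : ∀ s ∈ G.sureWin F, V s = 0 := fun s hs => by simp [V, hUW _ s hs]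
  obtain ⟨σ, hσ⟩ := G.exists_optimal_reach V
  intro s
  have hval : V s = G.reachVal F s := le_antisymm
    (G.le_reachVal σ fun τ => G.le_reachProb_of_le_preST hNoEC (fun t ht => (hVF t ht).le)
      (fun t ht => (hVW t ht).le) σ τ (fun t => (hle_pre t).trans (hσ τ t)) s)
    (G.reachVal_le_of_preR_le (fun t => le_ciInf fun k => hnonneg k t)
      (fun t ht => (hVF t ht).ge) hpre_le s)
  exact hval ▸ hlim s
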